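/- Let V be a 2-dimensional complex vector space, η a nonzero element of Λ²V*, and ω a positive real (1,1)-form on V. If W ⊆ V^k is a k-dimensional complex linear subspace that is Lagrangian for the symplectic form η_k = Σᵢ prᵢ*η on V^k, then the (k,k)-form ∏ᵢ prᵢ*ω restricts to a volume form on W (i.e., is nonzero on W). -/

import Mathlib

open Module

/-- Evaluation of the (real) wedge product `ρ 0 ∧ ⋯ ∧ ρ (k-1)` of `k` real 2-forms on a
real vector space, on a `2k`-tuple of vectors (up to a nonzero combinatorial constant). -/
noncomputable def wedgeEval {V' : Type*} (k : ℕ) (ρ : Fin k → V' → V' → ℝ)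
    (v : Fin (2 * k) → V') : ℝ :=
  ∑ σ : Equiv.Perm (Fin (2 * k)),
    ((Equiv.Perm.sign σ : ℤ) : ℝ) *
      ∏ i : Fin k,
        ρ i (v (σ ⟨2 * i.1, by have := i.2; omega⟩))
            (v (σ ⟨2 * i.1 + 1, by have := i.2; omega⟩))

/-!
In unitary coordinates `z₀, z₁` on `V` one has `ω(x, y) = ∑ₜ zₜ(x) conj (zₜ(y))` and
`η = c • (z₀ ∧ z₁)` with `c ≠ 0`. Write `z_{t,i} = zₜ ∘ prᵢ`. Expanding `∏ᵢ prᵢ*ω` over the choices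
`s : Fin k → Fin 2` of one coordinate in each factor, its value on `I b₀, b₀, I b₁, b₁, …`, for a
complex basis `b` of `W`, is `2 ^ k * ∑ₛ |det (z_{s(i),i}(bⱼ))| ^ 2`. Every summand is nonnegative,
and the `s`-th one vanishes only if `W` has a nonzero vector in the coordinate subspace
`⋂ᵢ ker z_{s(i),i}`. An isotropic subspace meets at least one of these coordinate Lagrangians
trivially.
-/

open ComplexConjugate

section Wedge

/-- The enumeration `(i, r) ↦ 2 * i + r`, which lists the arguments of the `i`-th factor of
`wedgeEval` as `(i, 0)` and `(i, 1)`. -/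
def pairEquiv (k : ℕ) : Fin k × Fin 2 ≃ Fin (2 * k) :=
  finProdFinEquiv.trans (finCongr (mul_comm k 2))

theorem pairEquiv_apply_zero {k : ℕ} (i : Fin k) (h : 2 * i.1 < 2 * k) :
    pairEquiv k (i, 0) = ⟨2 * i.1, h⟩ := by
  ext; simp [pairEquiv]

theorem pairEquiv_apply_one {k : ℕ} (i : Fin k) (h : 2 * i.1 + 1 < 2 * k) :
    pairEquiv k (i, 1) = ⟨2 * i.1 + 1, h⟩ := by
  ext; simp [pairEquiv, add_comm]

variable {U : Type*} {k : ℕ}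

theorem wedgeEval_comp_pairEquiv_symm (ρ : Fin k → U → U → ℝ) (v : Fin k × Fin 2 → U) :
    wedgeEval k ρ (v ∘ (pairEquiv k).symm) =
      ∑ σ : Equiv.Perm (Fin k × Fin 2), ((Equiv.Perm.sign σ : ℤ) : ℝ) *
        ∏ i, ρ i (v (σ (i, 0))) (v (σ (i, 1))) := by
  refine (Fintype.sum_equiv (pairEquiv k).permCongr _ _ fun σ ↦ ?_).symm
  simp only [Equiv.Perm.sign_permCongr, ← pairEquiv_apply_zero, ← pairEquiv_apply_one,
    Equiv.permCongr_apply, Function.comp_apply, Equiv.symm_apply_apply]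

theorem wedgeEval_sum {κ : Type*} [Fintype κ] (ρ : Fin k → κ → U → U → ℝ)
    (v : Fin (2 * k) → U) :
    wedgeEval k (fun i x y ↦ ∑ t, ρ i t x y) v =
      ∑ s : Fin k → κ, wedgeEval k (fun i ↦ ρ i (s i)) v := by
  simp only [wedgeEval, Fintype.prod_sum, Finset.mul_sum]
  exact Finset.sum_comm

theorem wedgeEval_mul_eq_det (α : Fin k → Fin 2 → U → ℝ) (v : Fin k × Fin 2 → U) :
    wedgeEval k (fun i x y ↦ α i 0 x * α i 1 y) (v ∘ (pairEquiv k).symm) =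
      (Matrix.of fun p q : Fin k × Fin 2 ↦ α q.1 q.2 (v p)).det := by
  simp only [wedgeEval_comp_pairEquiv_symm, Matrix.det_apply', Matrix.of_apply,
    Fintype.prod_prod_type, Fin.prod_univ_two]

end Wedge

theorem det_comp_leftMulMatrix_basisOneI {n : Type*} [Fintype n] [DecidableEq n]
    (M : Matrix n n ℂ) :
    (Matrix.comp n n (Fin 2) (Fin 2) ℝ
      (M.map (Algebra.leftMulMatrix Complex.basisOneI))).det = Complex.normSq M.det := by
  rw [← Algebra.norm_complex_apply, Algebra.norm_eq_matrix_det Complex.basisOneI,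
    ← AlgHom.coe_toRingHom, Matrix.det_det]

theorem im_mul_conj_eq_sum (z w : ℂ) :
    (z * conj w).im = ∑ e, (![1, Complex.I] e * z).im * (![1, Complex.I] e * w).re := by
  simp [Fin.sum_univ_two, add_comm]

section PositiveForms

variable {U : Type*} [AddCommGroup U] [Module ℂ U] {k : ℕ}

/-- The real `2k`-tuple `I b₀, b₀, I b₁, b₁, …` underlying a complex `k`-tuple `b`. The order within
a pair is the one for which `Im (z(x) conj (z(y)))` takes the value `|z(b)| ^ 2 ≥ 0` on
`(I b, b)`. -/
noncomputable def realTuple (b : Fin k → U) : Fin (2 * k) → U :=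
  (fun p : Fin k × Fin 2 ↦ ![Complex.I • b p.1, b p.1] p.2) ∘ (pairEquiv k).symm

theorem realTuple_mem {W : Submodule ℂ U} {b : Fin k → U} (hb : ∀ j, b j ∈ W)
    (j : Fin (2 * k)) : realTuple b j ∈ W := by
  obtain ⟨⟨i, r⟩, rfl⟩ := (pairEquiv k).surjective j
  fin_cases r
  · simpa [realTuple] using W.smul_mem Complex.I (hb i)
  · simpa [realTuple] using hb i

theorem wedgeEval_im_mul_re_realTuple (g : Fin k → Dual ℂ U) (b : Fin k → U) :
    wedgeEval k (fun i x y ↦ (g i x).im * (g i y).re) (realTuple b) =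
      Complex.normSq (Matrix.of fun j i ↦ g i (b j)).det := by
  refine (wedgeEval_mul_eq_det (fun i ↦ ![fun x ↦ (g i x).im, fun x ↦ (g i x).re]) _).trans ?_
  rw [← det_comp_leftMulMatrix_basisOneI]
  congr 1
  ext ⟨j, q⟩ ⟨i, r⟩
  fin_cases q <;> fin_cases r <;> simp [Algebra.leftMulMatrix_complex]

theorem wedgeEval_im_mul_conj_realTuple (g : Fin k → Dual ℂ U) (b : Fin k → U) :
    wedgeEval k (fun i x y ↦ (g i x * conj (g i y)).im) (realTuple b) =
      2 ^ k * Complex.normSq (Matrix.of fun j i ↦ g i (b j)).det := by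
  let u : Fin 2 → ℂ := ![1, Complex.I]
  have normSq_u (e : Fin 2) : Complex.normSq (u e) = 1 := by fin_cases e <;> simp [u]
  have normSq_det (s : Fin k → Fin 2) :
      Complex.normSq (Matrix.of fun j i ↦ u (s i) * g i (b j)).det =
        Complex.normSq (Matrix.of fun j i ↦ g i (b j)).det := by
    have := Matrix.det_mul_row (fun i ↦ u (s i)) (Matrix.of fun j i ↦ g i (b j))
    simp only [Matrix.of_apply] at this
    rw [this, map_mul, map_prod]
    simp only [normSq_u, Finset.prod_const_one, one_mul]
  calc wedgeEval k (fun i x y ↦ (g i x * conj (g i y)).im) (realTuple b)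
      = ∑ s : Fin k → Fin 2, wedgeEval k
          (fun i x y ↦ ((u (s i) • g i) x).im * ((u (s i) • g i) y).re) (realTuple b) := by
        simp only [im_mul_conj_eq_sum]
        exact wedgeEval_sum (fun i e x y ↦ ((u e • g i) x).im * ((u e • g i) y).re) _
    _ = ∑ s : Fin k → Fin 2, Complex.normSq (Matrix.of fun j i ↦ u (s i) * g i (b j)).det :=
        Finset.sum_congr rfl fun s _ ↦ wedgeEval_im_mul_re_realTuple (fun i ↦ u (s i) • g i) b
    _ = 2 ^ k * Complex.normSq (Matrix.of fun j i ↦ g i (b j)).det := by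
        simp [normSq_det]

theorem wedgeEval_im_sum_mul_conj_realTuple {κ : Type*} [Fintype κ] (g : Fin k → κ → Dual ℂ U)
    (b : Fin k → U) :
    wedgeEval k (fun i x y ↦ (∑ t, g i t x * conj (g i t y)).im) (realTuple b) =
      2 ^ k * ∑ s : Fin k → κ, Complex.normSq (Matrix.of fun j i ↦ g i (s i) (b j)).det := by
  simp only [Complex.im_sum]
  rw [wedgeEval_sum (fun i t x y ↦ (g i t x * conj (g i t y)).im), Finset.mul_sum]
  exact Finset.sum_congr rfl fun s _ ↦ wedgeEval_im_mul_conj_realTuple (fun i ↦ g i (s i)) b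

theorem wedgeEval_im_sum_mul_conj_realTuple_pos {κ : Type*} [Fintype κ]
    (g : Fin k → κ → Dual ℂ U) (b : Fin k → U) (s : Fin k → κ)
    (hs : (Matrix.of fun j i ↦ g i (s i) (b j)).det ≠ 0) :
    0 < wedgeEval k (fun i x y ↦ (∑ t, g i t x * conj (g i t y)).im) (realTuple b) := by
  rw [wedgeEval_im_sum_mul_conj_realTuple]
  have sum_pos : 0 < ∑ s : Fin k → κ,
      Complex.normSq (Matrix.of fun j i ↦ g i (s i) (b j)).det :=
    Finset.sum_pos' (fun _ _ ↦ Complex.normSq_nonneg _)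
      ⟨s, Finset.mem_univ s, Complex.normSq_pos.2 hs⟩
  positivity

end PositiveForms

section Hermitian

variable {𝕜 V : Type*} [RCLike 𝕜] [AddCommGroup V] [Module 𝕜 V]

/-- Positive definite Hermitian forms, linear in the first argument (Mathlib's `inner` is linear in
the second one). -/
structure IsPosDefHermitian (ω : V → V → 𝕜) : Prop where
  add_left : ∀ v v' w, ω (v + v') w = ω v w + ω v' w
  smul_left : ∀ (a : 𝕜) v w, ω (a • v) w = a * ω v w
  conj_symm : ∀ v w, ω w v = conj (ω v w)
  re_pos : ∀ v, v ≠ 0 → 0 < RCLike.re (ω v v)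

namespace IsPosDefHermitian

variable {ω : V → V → 𝕜}

/-- The inner product `⟪x, y⟫ = ω y x` on `V` given by a positive definite Hermitian form. -/
abbrev core (hω : IsPosDefHermitian ω) : InnerProductSpace.Core 𝕜 V where
  inner x y := ω y x
  conj_inner_symm _ _ := (hω.conj_symm _ _).symm
  re_inner_nonneg x := by
    obtain rfl | hx := eq_or_ne x 0
    · have ω_zero_left : ω 0 0 = 0 := by simpa using hω.smul_left 0 0 0
      simp [ω_zero_left]
    · exact (hω.re_pos x hx).le
  add_left x y z := by
    rw [hω.conj_symm, hω.add_left, map_add, ← hω.conj_symm, ← hω.conj_symm]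
  smul_left x y r := by
    rw [hω.conj_symm, hω.smul_left, map_mul, ← hω.conj_symm]
  definite x hx := by
    by_contra hne
    simpa [hx] using hω.re_pos x hne

theorem exists_basis_apply_eq_sum [FiniteDimensional 𝕜 V] (hω : IsPosDefHermitian ω) {n : ℕ}
    (hn : finrank 𝕜 V = n) :
    ∃ B : Basis (Fin n) 𝕜 V, ∀ x y, ω x y = ∑ t, B.coord t x * conj (B.coord t y) := by
  let _ : NormedAddCommGroup V := hω.core.toNormedAddCommGroup
  let _ : InnerProductSpace 𝕜 V := InnerProductSpace.ofCore hω.core.toCore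
  let B := (stdOrthonormalBasis 𝕜 V).reindex (finCongr hn)
  refine ⟨B.toBasis, fun x y ↦ ?_⟩
  calc ω x y = inner 𝕜 y x := rfl
    _ = ∑ t, inner 𝕜 y (B t) * inner 𝕜 (B t) x := (B.sum_inner_mul_inner y x).symm
    _ = ∑ t, B.toBasis.coord t x * conj (B.toBasis.coord t y) := by
      simp [OrthonormalBasis.coe_toBasis_repr_apply, OrthonormalBasis.repr_apply_apply, mul_comm]

end IsPosDefHermitian

end Hermitian

section Alternating

variable {R V : Type*} [CommRing R] [AddCommGroup V] [Module R V] {η : V →ₗ[R] V →ₗ[R] R}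

theorem isAlt_apply_eq_mul_coord (hη : η.IsAlt) (B : Basis (Fin 2) R V) (x y : V) :
    η x y = η (B 0) (B 1) *
      (B.coord 0 x * B.coord 1 y - B.coord 1 x * B.coord 0 y) := by
  have η_swap : η (B 1) (B 0) = -η (B 0) (B 1) := (hη.neg (B 0) (B 1)).symm
  conv_lhs => rw [← B.sum_repr x, ← B.sum_repr y]
  simp only [Fin.sum_univ_two, map_add, map_smul, LinearMap.add_apply, LinearMap.smul_apply,
    smul_eq_mul, hη.self_eq_zero, η_swap, Basis.coord_apply]
  ring

theorem isAlt_apply_basis_ne_zero (hη : η.IsAlt) (hη_ne : η ≠ 0) (B : Basis (Fin 2) R V) :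
    η (B 0) (B 1) ≠ 0 := by
  contrapose! hη_ne
  ext x y
  simp [isAlt_apply_eq_mul_coord hη B x y, hη_ne]

end Alternating

section Dual

variable {K E ι : Type*} [Field K] [AddCommGroup E] [Module K E]

theorem exists_linearIndepOn_forall_eq_zero (f : ι → Dual K E) :
    ∃ I : Set ι, LinearIndepOn K f I ∧ ∀ x, (∀ i ∈ I, f i x = 0) → ∀ i, f i x = 0 := by
  obtain ⟨I, -, -, hspan, hind⟩ :=
    exists_linearIndepOn_extension (linearIndepOn_empty K f) (Set.empty_subset Set.univ)
  refine ⟨I, hind, fun x hx i ↦ ?_⟩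
  have span_le : Submodule.span K (f '' I) ≤ LinearMap.ker (Dual.eval K E x) := by
    rw [Submodule.span_le]
    rintro _ ⟨j, hj, rfl⟩
    exact hx j hj
  exact span_le (hspan ⟨i, trivial, rfl⟩)

-- With `N = ⋂ᵢ ker (z i 0)`, take `s i = 1` exactly when `z i 1` belongs to a chosen basis of the
-- span of the restrictions `z j 1|_N`. Pairing `x` with `N` then forces `x ∈ N`.
theorem exists_forall_eq_zero_of_isotropic [Fintype ι] (z : ι → Fin 2 → Dual K E)
    (hz : ∀ x y, ∑ i, (z i 0 x * z i 1 y - z i 1 x * z i 0 y) = 0) :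
    ∃ s : ι → Fin 2, ∀ x, (∀ i, z i (s i) x = 0) → ∀ i t, z i t x = 0 := by
  classical
  let N : Submodule K E := ⨅ i, LinearMap.ker (z i 0)
  have mem_N (x : E) : x ∈ N ↔ ∀ i, z i 0 x = 0 := by simp [N]
  let f : ι → Dual K N := fun i ↦ z i 1 ∘ₗ N.subtype
  obtain ⟨I, hind, hI⟩ := exists_linearIndepOn_forall_eq_zero f
  refine ⟨fun i ↦ if i ∈ I then 1 else 0, fun x hx ↦ ?_⟩
  have one_eq_zero : ∀ i ∈ I, z i 1 x = 0 := fun i hi ↦ by simpa [hi] using hx i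
  have zero_eq_zero_of_notMem : ∀ i ∉ I, z i 0 x = 0 := fun i hi ↦ by simpa [hi] using hx i
  have sum_smul_eq_zero : ∑ i ∈ I.toFinset, z i 0 x • f i = 0 := by
    ext ⟨y, hy⟩
    rw [mem_N] at hy
    calc (∑ i ∈ I.toFinset, z i 0 x • f i) ⟨y, _⟩
        = ∑ i ∈ I.toFinset, z i 0 x * z i 1 y := by simp [f]
      _ = ∑ i, z i 0 x * z i 1 y :=
        Finset.sum_subset (Finset.subset_univ _) fun i _ hi ↦ by
          rw [zero_eq_zero_of_notMem i (by simpa using hi), zero_mul]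
      _ = 0 := by simpa [hy] using hz x y
  have zero_eq_zero_of_mem : ∀ i ∈ I, z i 0 x = 0 := fun i hi ↦
    linearIndepOn_finset_iff.1 (by simpa using hind) (fun i ↦ z i 0 x) sum_smul_eq_zero i
      (by simpa using hi)
  have zero_eq_zero (i : ι) : z i 0 x = 0 := by
    by_cases hi : i ∈ I
    exacts [zero_eq_zero_of_mem i hi, zero_eq_zero_of_notMem i hi]
  exact fun i ↦ Fin.forall_fin_two.2
    ⟨zero_eq_zero i, hI ⟨x, (mem_N x).2 zero_eq_zero⟩ one_eq_zero i⟩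

end Dual

theorem det_dual_apply_ne_zero {R E ι : Type*} [CommRing R] [IsDomain R] [AddCommGroup E]
    [Module R E] [Fintype ι] [DecidableEq ι] {g : ι → Dual R E} {b : ι → E}
    (hb : LinearIndependent R b) (hg : ∀ x, (∀ i, g i x = 0) → x = 0) :
    (Matrix.of fun j i ↦ g i (b j)).det ≠ 0 := by
  intro det_eq_zero
  obtain ⟨a, a_ne_zero, ha⟩ := Matrix.exists_vecMul_eq_zero_iff.2 det_eq_zero
  have sum_eq_zero : ∑ j, a j • b j = 0 := hg _ fun i ↦ by
    simpa [Matrix.vecMul, dotProduct] using congrFun ha i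
  exact a_ne_zero (funext (Fintype.linearIndependent_iff.1 hb a sum_eq_zero))

/-- Let `V` be a 2-dimensional complex vector space, `η` a nonzero element of `Λ²V*`, and
`ω` a positive real (1,1)-form on `V` (encoded by its positive definite Hermitian form).
If `W ⊆ V^k` is a `k`-dimensional complex subspace which is Lagrangian for
`η_k = Σᵢ prᵢ*η`, then `∏ᵢ prᵢ*ω` restricts to a volume form on `W`, i.e. is nonzero on
some (hence any) `2k`-tuple spanning `W` over `ℝ`. -/
theorem stmt0 {V : Type*} [AddCommGroup V] [Module ℂ V]
    (hV : finrank ℂ V = 2)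
    (η : V →ₗ[ℂ] V →ₗ[ℂ] ℂ) (hη_alt : ∀ v, η v v = 0) (hη_ne : η ≠ 0)
    (ω : V → V → ℂ)
    (hω_add : ∀ v v' w, ω (v + v') w = ω v w + ω v' w)
    (hω_smul : ∀ (a : ℂ) v w, ω (a • v) w = a * ω v w)
    (hω_conj : ∀ v w, ω w v = starRingEnd ℂ (ω v w))
    (hω_pos : ∀ v, v ≠ 0 → 0 < (ω v v).re)
    (k : ℕ) (W : Submodule ℂ (Fin k → V))
    (hdim : finrank ℂ W = k)
    (hLag : ∀ v ∈ W, ∀ w ∈ W, ∑ i, η (v i) (w i) = 0) :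
    ∃ w : Fin (2 * k) → (Fin k → V), (∀ j, w j ∈ W) ∧
      wedgeEval k (fun i x y => (ω (x i) (y i)).im) w ≠ 0 := by
  have : FiniteDimensional ℂ V := FiniteDimensional.of_finrank_pos (by omega)
  obtain ⟨B, ω_eq⟩ := IsPosDefHermitian.exists_basis_apply_eq_sum
    ⟨hω_add, hω_smul, hω_conj, hω_pos⟩ hV
  let z : Fin k → Fin 2 → Dual ℂ (Fin k → V) := fun i t ↦ B.coord t ∘ₗ LinearMap.proj i
  have isotropic (x y : W) : ∑ i, (z i 0 x * z i 1 y - z i 1 x * z i 0 y) = 0 := by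
    refine (mul_eq_zero.1 ?_).resolve_left (isAlt_apply_basis_ne_zero hη_alt hη_ne B)
    rw [Finset.mul_sum, ← hLag x x.2 y y.2]
    exact Finset.sum_congr rfl fun i _ ↦ (isAlt_apply_eq_mul_coord hη_alt B _ _).symm
  obtain ⟨s, hs⟩ :=
    exists_forall_eq_zero_of_isotropic (fun i t ↦ z i t ∘ₗ W.subtype) isotropic
  have transverse (x : W) (hx : ∀ i, z i (s i) x = 0) : x = 0 :=
    Subtype.ext (funext fun i ↦ B.forall_coord_eq_zero_iff.1 (hs x hx i))
  let b := finBasisOfFinrankEq ℂ W hdim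
  refine ⟨realTuple fun j ↦ (b j : Fin k → V), realTuple_mem fun j ↦ (b j).2, ?_⟩
  simp only [ω_eq]
  exact (wedgeEval_im_sum_mul_conj_realTuple_pos z _ s
    (det_dual_apply_ne_zero (g := fun i ↦ z i (s i) ∘ₗ W.subtype) b.linearIndependent
      transverse)).ne'
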